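/- arXiv:1112.0253 — 2 statements merged into one kernel-verified Lean document; each statement's English description precedes it below -/
import Mathlib

section
/- Let z, z', z'' ∈ (ℝ²)⁵ with zᵢ ≠ 0 for all i, and suppose there exist nonzero real scalars αᵢ, βᵢ (i = 1,…,5) such that z'ᵢ = αᵢzᵢ and z''ᵢ = βᵢzᵢ. Then for every w ∈ ℝ¹⁰: wᵀ(A_e^{(2)}·D(z')ᵀ·D(z)) = 0 if and only if wᵀ(A_e^{(2)}·D(z'')ᵀ) = 0. (In the formation-control interpretation, w is a left eigenvector of the Jacobian ∂F/∂z with eigenvalue 0 if and only if wᵀ∂F/∂d = 0, for frameworks in which z₁ is parallel to z₅.) -/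
open Matrix

/-- The edge-adjacency matrix of the 2-cycles. -/
def Ae : Matrix (Fin 5) (Fin 5) ℝ :=
  !![-1, 1, 0, 0, -1;
      0, -1, 1, 0, 0;
      1, 0, -1, 0, 1;
      0, 0, 1, -1, 0;
     -1, 0, 0, 1, -1]

/-- `A_e^{(2)} = A_e ⊗ I₂`, the Kronecker product with the 2×2 identity. -/
noncomputable def Ae2 : Matrix (Fin 5 × Fin 2) (Fin 5 × Fin 2) ℝ :=
  Matrix.kroneckerMap (· * ·) Ae (1 : Matrix (Fin 2) (Fin 2) ℝ)

/-- `D(z)`: the 5×10 block-diagonal matrix whose `i`-th diagonal block is the row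
vector `zᵢᵀ`. -/
def Dmat (z : Fin 5 → Fin 2 → ℝ) : Matrix (Fin 5) (Fin 5 × Fin 2) ℝ :=
  Matrix.of fun i p => if p.1 = i then z i p.2 else 0

/-!
Write `u = w A` and split `u` into blocks `uᵢ` conformal with `z`. The `i`-th entry of `u D(z')ᵀ`
is `αᵢ ⟨uᵢ, zᵢ⟩`, and multiplying by `D(z)` turns it into the block `αᵢ ⟨uᵢ, zᵢ⟩ zᵢ`. This
block vanishes only if the entry does: when `zᵢ = 0`, the entry is already zero. Rescaling by a
nonzero `αᵢ` or `βᵢ` does not affect whether `⟨uᵢ, zᵢ⟩` vanishes.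
-/

section RowBlockDiagonal

variable {ι κ m R : Type*}

/-- The matrix `D(z)` for a family of row vectors `zᵢ : κ → R` over an arbitrary index type; it
generalizes `Dmat`. Columns are indexed by pairs (block, position in the block). -/
def rowBlockDiagonal [DecidableEq ι] [Zero R] (z : ι → κ → R) : Matrix ι (ι × κ) R :=
  Matrix.of fun i p => if p.1 = i then z i p.2 else 0

theorem vecMul_rowBlockDiagonal_apply [DecidableEq ι] [Fintype ι] [NonUnitalNonAssocSemiring R]
    (z : ι → κ → R) (y : ι → R) (i : ι) (j : κ) :
    (y ᵥ* rowBlockDiagonal z) (i, j) = y i * z i j := by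
  simp [rowBlockDiagonal, vecMul, dotProduct]

theorem vecMul_rowBlockDiagonal_eq_zero_iff [DecidableEq ι] [Fintype ι]
    [NonUnitalNonAssocSemiring R] (z : ι → κ → R) (y : ι → R) :
    y ᵥ* rowBlockDiagonal z = 0 ↔ ∀ i, y i • z i = 0 := by
  simp [funext_iff, vecMul_rowBlockDiagonal_apply]

theorem vecMul_transpose_rowBlockDiagonal_apply [DecidableEq ι] [Fintype ι] [Fintype κ]
    [NonUnitalNonAssocSemiring R] (z : ι → κ → R) (u : ι × κ → R) (i : ι) :
    (u ᵥ* (rowBlockDiagonal z)ᵀ) i = (fun j => u (i, j)) ⬝ᵥ z i := by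
  simp [rowBlockDiagonal, vecMul, dotProduct, Fintype.sum_prod_type_right]

theorem dotProduct_smul_self_eq_zero_iff [Fintype κ] [NonUnitalNonAssocSemiring R]
    [NoZeroDivisors R] (v x : κ → R) : (v ⬝ᵥ x) • x = 0 ↔ v ⬝ᵥ x = 0 := by
  refine ⟨fun h => ?_, fun h => by ext; simp [h]⟩
  by_contra hvx
  have hx : x = 0 := funext fun j => (mul_eq_zero.mp (congrFun h j)).resolve_left hvx
  exact hvx (by rw [hx, dotProduct_zero])

theorem vecMul_transpose_rowBlockDiagonal_smul_eq_zero_iff [DecidableEq ι] [Fintype ι] [Fintype κ]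
    [CommSemiring R] [NoZeroDivisors R] (z : ι → κ → R) {c : ι → R} (hc : ∀ i, c i ≠ 0)
    (u : ι × κ → R) :
    u ᵥ* (rowBlockDiagonal fun i => c i • z i)ᵀ = 0 ↔ u ᵥ* (rowBlockDiagonal z)ᵀ = 0 := by
  simp only [funext_iff, Pi.zero_apply, vecMul_transpose_rowBlockDiagonal_apply, dotProduct_smul,
    smul_eq_mul, mul_eq_zero, hc, false_or]

theorem vecMul_transpose_rowBlockDiagonal_smul_vecMul_eq_zero_iff [DecidableEq ι] [Fintype ι]
    [Fintype κ] [CommSemiring R] [NoZeroDivisors R] (z : ι → κ → R) (c : ι → R)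
    (u : ι × κ → R) :
    u ᵥ* (rowBlockDiagonal fun i => c i • z i)ᵀ ᵥ* rowBlockDiagonal z = 0 ↔
      u ᵥ* (rowBlockDiagonal fun i => c i • z i)ᵀ = 0 := by
  have entry_eq (i : ι) : (u ᵥ* (rowBlockDiagonal fun i => c i • z i)ᵀ) i =
      (c i • fun j => u (i, j)) ⬝ᵥ z i := by
    rw [vecMul_transpose_rowBlockDiagonal_apply, dotProduct_smul, smul_dotProduct]
  rw [vecMul_rowBlockDiagonal_eq_zero_iff, funext_iff]
  simp only [entry_eq, dotProduct_smul_self_eq_zero_iff, Pi.zero_apply]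

theorem left_kernel_jacobian_iff_parameter_general [DecidableEq ι] [Fintype ι] [Fintype κ]
    [Fintype m] [CommSemiring R] [NoZeroDivisors R] (A : Matrix m (ι × κ) R)
    (z z' z'' : ι → κ → R) (α β : ι → R) (hα : ∀ i, α i ≠ 0) (hβ : ∀ i, β i ≠ 0)
    (hz' : ∀ i, z' i = α i • z i) (hz'' : ∀ i, z'' i = β i • z i) (w : m → R) :
    w ᵥ* (A * (rowBlockDiagonal z')ᵀ * rowBlockDiagonal z) = 0
      ↔ w ᵥ* (A * (rowBlockDiagonal z'')ᵀ) = 0 := by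
  obtain rfl : z' = fun i => α i • z i := funext hz'
  obtain rfl : z'' = fun i => β i • z i := funext hz''
  simp only [← vecMul_vecMul]
  rw [vecMul_transpose_rowBlockDiagonal_smul_vecMul_eq_zero_iff,
    vecMul_transpose_rowBlockDiagonal_smul_eq_zero_iff z hα,
    vecMul_transpose_rowBlockDiagonal_smul_eq_zero_iff z hβ]

end RowBlockDiagonal

/-- Suppose `zᵢ ≠ 0` and `z'ᵢ = αᵢ zᵢ`, `z''ᵢ = βᵢ zᵢ` with all `αᵢ, βᵢ` nonzero.
Then `w` annihilates `A_e^{(2)}·D(z')ᵀ·D(z)` on the left iff it annihilates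
`A_e^{(2)}·D(z'')ᵀ` on the left. (`w` is a left zero-eigenvector of the Jacobian
`∂F/∂z` iff `wᵀ∂F/∂d = 0`.) -/
theorem left_kernel_jacobian_iff_parameter (z z' z'' : Fin 5 → Fin 2 → ℝ)
    (α β : Fin 5 → ℝ) (hz : ∀ i, z i ≠ 0) (hα : ∀ i, α i ≠ 0) (hβ : ∀ i, β i ≠ 0)
    (hz' : ∀ i, z' i = α i • z i) (hz'' : ∀ i, z'' i = β i • z i)
    (w : Fin 5 × Fin 2 → ℝ) :
    Matrix.vecMul w (Ae2 * (Dmat z')ᵀ * Dmat z) = 0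
      ↔ Matrix.vecMul w (Ae2 * (Dmat z'')ᵀ) = 0 :=
  left_kernel_jacobian_iff_parameter_general Ae2 z z' z'' α β hα hβ hz' hz'' w
end

section
/- Let d₁, …, d₅ be positive reals. Then the set of frameworks x = (x₁,x₂,x₃,x₄) ∈ (ℝ²)⁴ satisfying ‖x₂−x₁‖² = d₁, ‖x₃−x₂‖² = d₂, ‖x₁−x₃‖² = d₃, ‖x₃−x₄‖² = d₄ and ‖x₄−x₁‖² = d₅ is covered by at most 4 orbits of the group of orientation-preserving rigid motions of the plane: there exist frameworks y¹, y², y³, y⁴ ∈ (ℝ²)⁴ such that every framework x satisfying the five constraints equals (g(yʲ₁), g(yʲ₂), g(yʲ₃), g(yʲ₄)) for some j ∈ {1,2,3,4} and some map g : ℝ² → ℝ² which is a composition of a rotation and a translation. Hence the set of design equilibria of the 2-cycles is finite up to rigid transformations. -/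
open Matrix

/-!
The edge `(3, 1)` belongs to both triangles of the framework. Relative to it, the position of
another vertex is fixed up to a rigid motion by a dot product and a cross product: the dot product
is determined by the edge lengths through the law of cosines, and then the square of the cross
product through Lagrange's identity. Hence every equilibrium arises, up to a rigid motion, from a
single one by reflecting some of the two remaining vertices across the line of the common edge.
This uses no square roots, and so works over any field of characteristic other than two.
-/

section CommRing

variable {ι R : Type*} [CommRing R]

/-- The squared Euclidean distance, in the coordinates of `ι → R`. -/
def sqDist [Fintype ι] (v w : ι → R) : R := (v - w) ⬝ᵥ (v - w)

lemma sqDist_self [Fintype ι] (v : ι → R) : sqDist v v = 0 := by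
  simp [sqDist]

lemma sqDist_comm [Fintype ι] (v w : ι → R) : sqDist v w = sqDist w v := by
  rw [sqDist, sqDist, ← neg_sub w v, neg_dotProduct_neg]

lemma two_mul_dotProduct_sub_sub [Fintype ι] (a v w : ι → R) :
    2 * ((v - a) ⬝ᵥ (w - a)) = sqDist v a + sqDist w a - sqDist w v := by
  have hwv : w - v = (w - a) - (v - a) := by abel
  simp only [sqDist, hwv, sub_dotProduct (w - a), dotProduct_sub _ (w - a),
    dotProduct_comm (w - a) (v - a)]
  ring

/-- The scalar cross product of two vectors of the plane, i.e. the signed area of the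
parallelogram they span. -/
def planeCross (v w : Fin 2 → R) : R := v 0 * w 1 - v 1 * w 0

lemma planeCross_self (v : Fin 2 → R) : planeCross v v = 0 := by
  rw [planeCross]; ring

lemma planeCross_zero (v : Fin 2 → R) : planeCross v 0 = 0 := by
  simp [planeCross]

lemma planeCross_mulVec_mulVec (M : Matrix (Fin 2) (Fin 2) R) (v w : Fin 2 → R) :
    planeCross (M *ᵥ v) (M *ᵥ w) = M.det * planeCross v w := by
  simp only [planeCross, mulVec, dotProduct, Fin.sum_univ_two, det_fin_two]
  ring

lemma planeCross_sq (v w : Fin 2 → R) :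
    planeCross v w ^ 2 = (v ⬝ᵥ v) * (w ⬝ᵥ w) - (v ⬝ᵥ w) ^ 2 := by
  simp only [planeCross, dotProduct, Fin.sum_univ_two]
  ring

lemma dotProduct_mulVec_mulVec_of_transpose_mul_self [Fintype ι] [DecidableEq ι]
    {M : Matrix ι ι R} (hM : Mᵀ * M = 1) (v w : ι → R) : (M *ᵥ v) ⬝ᵥ (M *ᵥ w) = v ⬝ᵥ w := by
  rw [dotProduct_mulVec, vecMul_mulVec, ← dotProduct_mulVec, hM, one_mulVec]

lemma transpose_mul_self_fin_two_of {c s : R} (h : c ^ 2 + s ^ 2 = 1) :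
    !![c, -s; s, c]ᵀ * !![c, -s; s, c] = 1 := by
  have htranspose : !![c, -s; s, c]ᵀ = !![c, s; -s, c] := (etaExpand_eq _).symm
  rw [htranspose, mul_fin_two, one_fin_two]
  congr! 4
  · linear_combination h
  · ring
  · ring
  · congr 1
    linear_combination h

lemma dotProduct_mulVec_fin_two_of (c s : R) (q : Fin 2 → R) :
    q ⬝ᵥ (!![c, -s; s, c] *ᵥ q) = c * (q ⬝ᵥ q) := by
  simp only [dotProduct, mulVec, Fin.sum_univ_two, of_apply, cons_val_zero, cons_val_one]
  ring

lemma planeCross_mulVec_fin_two_of (c s : R) (q : Fin 2 → R) :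
    planeCross q (!![c, -s; s, c] *ᵥ q) = s * (q ⬝ᵥ q) := by
  simp only [planeCross, dotProduct, mulVec, Fin.sum_univ_two, of_apply, cons_val_zero,
    cons_val_one]
  ring

/-- Congruence of the frameworks `x` and `y` under an orientation-preserving rigid motion, which
carries `y` to `x`. -/
def DirectlyCongruent (y x : ι → Fin 2 → R) : Prop :=
  ∃ (M : Matrix (Fin 2) (Fin 2) R) (t : Fin 2 → R),
    Mᵀ * M = 1 ∧ M.det = 1 ∧ ∀ i, x i = M *ᵥ y i + t

/-- The equations satisfied by a design equilibrium of the 2-cycles with squared edge lengths `d`;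
the agents `x₁, …, x₄` are `x 0, …, x 3`. -/
def IsDesignEquilibrium (d : Fin 5 → R) (x : Fin 4 → Fin 2 → R) : Prop :=
  sqDist (x 1) (x 0) = d 0 ∧ sqDist (x 2) (x 1) = d 1 ∧ sqDist (x 0) (x 2) = d 2 ∧
    sqDist (x 2) (x 3) = d 3 ∧ sqDist (x 3) (x 0) = d 4

namespace IsDesignEquilibrium

variable {d : Fin 5 → R} {x z : Fin 4 → Fin 2 → R}

lemma sqDist_zero_eq (hx : IsDesignEquilibrium d x) (hz : IsDesignEquilibrium d z) (i : Fin 4) :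
    sqDist (x i) (x 0) = sqDist (z i) (z 0) := by
  obtain ⟨hx₁₀, -, hx₀₂, -, hx₃₀⟩ := hx
  obtain ⟨hz₁₀, -, hz₀₂, -, hz₃₀⟩ := hz
  fin_cases i
  · exact (sqDist_self _).trans (sqDist_self _).symm
  · exact hx₁₀.trans hz₁₀.symm
  · exact (sqDist_comm _ _).trans ((hx₀₂.trans hz₀₂.symm).trans (sqDist_comm _ _))
  · exact hx₃₀.trans hz₃₀.symm

lemma sqDist_two_eq (hx : IsDesignEquilibrium d x) (hz : IsDesignEquilibrium d z) (i : Fin 4) :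
    sqDist (x i) (x 2) = sqDist (z i) (z 2) := by
  obtain ⟨-, hx₂₁, hx₀₂, hx₂₃, -⟩ := hx
  obtain ⟨-, hz₂₁, hz₀₂, hz₂₃, -⟩ := hz
  fin_cases i
  · exact hx₀₂.trans hz₀₂.symm
  · exact (sqDist_comm _ _).trans ((hx₂₁.trans hz₂₁.symm).trans (sqDist_comm _ _))
  · exact (sqDist_self _).trans (sqDist_self _).symm
  · exact (sqDist_comm _ _).trans ((hx₂₃.trans hz₂₃.symm).trans (sqDist_comm _ _))

end IsDesignEquilibrium

end CommRing

section Field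

variable {ι K : Type*} [Field K]

lemma eq_of_dotProduct_eq_of_planeCross_eq {p v w : Fin 2 → K} (hp : p ⬝ᵥ p ≠ 0)
    (hdot : p ⬝ᵥ v = p ⬝ᵥ w) (hcross : planeCross p v = planeCross p w) : v = w := by
  simp only [planeCross, dotProduct, Fin.sum_univ_two] at hp hdot hcross
  refine funext (Fin.forall_fin_two.2 ⟨mul_left_cancel₀ hp ?_, mul_left_cancel₀ hp ?_⟩)
  · linear_combination p 0 * hdot - p 1 * hcross
  · linear_combination p 1 * hdot + p 0 * hcross

lemma exists_rotation_mulVec_eq {p q : Fin 2 → K} (hq : q ⬝ᵥ q ≠ 0) (hpq : p ⬝ᵥ p = q ⬝ᵥ q) :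
    ∃ M : Matrix (Fin 2) (Fin 2) K, Mᵀ * M = 1 ∧ M.det = 1 ∧ M *ᵥ q = p := by
  set c := (q ⬝ᵥ p) / (q ⬝ᵥ q) with hc
  set s := planeCross q p / (q ⬝ᵥ q) with hs
  have hcs : c ^ 2 + s ^ 2 = 1 := by
    rw [hc, hs, div_pow, div_pow, planeCross_sq, hpq]
    field_simp
    ring
  refine ⟨!![c, -s; s, c], transpose_mul_self_fin_two_of hcs, ?_,
    eq_of_dotProduct_eq_of_planeCross_eq hq ?_ ?_⟩
  · rw [det_fin_two_of]
    linear_combination hcs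
  · have hcq : c * (q ⬝ᵥ q) = q ⬝ᵥ p := div_mul_cancel₀ _ hq
    rw [← hcq, dotProduct_mulVec_fin_two_of]
  · have hsq : s * (q ⬝ᵥ q) = planeCross q p := div_mul_cancel₀ _ hq
    rw [← hsq, planeCross_mulVec_fin_two_of]

theorem directlyCongruent_of_dotProduct_eq_of_planeCross_eq {x y : ι → Fin 2 → K} {a b : ι}
    (hab : sqDist (y b) (y a) ≠ 0)
    (hdot : ∀ i, (x b - x a) ⬝ᵥ (x i - x a) = (y b - y a) ⬝ᵥ (y i - y a))
    (hcross : ∀ i, planeCross (x b - x a) (x i - x a) = planeCross (y b - y a) (y i - y a)) :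
    DirectlyCongruent y x := by
  obtain ⟨M, horth, hdet, hM⟩ := exists_rotation_mulVec_eq hab (hdot b)
  refine ⟨M, x a - M *ᵥ y a, horth, hdet, fun i => ?_⟩
  have hbase : (x b - x a) ⬝ᵥ (x b - x a) ≠ 0 := (hdot b).trans_ne hab
  have hi : x i - x a = M *ᵥ (y i - y a) := by
    apply eq_of_dotProduct_eq_of_planeCross_eq hbase
    · rw [hdot, ← hM, dotProduct_mulVec_mulVec_of_transpose_mul_self horth]
    · rw [hcross, ← hM, planeCross_mulVec_mulVec, hdet, one_mul]
  rw [← sub_add_cancel (x i) (x a), hi, mulVec_sub]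
  abel

/-- Reflection of the vector `w` across the line spanned by `q`. It is junk (equal to `-w`) if
`q ⬝ᵥ q = 0`. -/
def reflectAcross (q w : Fin 2 → K) : Fin 2 → K := (2 * (q ⬝ᵥ w) / (q ⬝ᵥ q)) • q - w

lemma dotProduct_reflectAcross {q : Fin 2 → K} (hq : q ⬝ᵥ q ≠ 0) (w : Fin 2 → K) :
    q ⬝ᵥ reflectAcross q w = q ⬝ᵥ w := by
  rw [reflectAcross, dotProduct_sub, dotProduct_smul, smul_eq_mul, div_mul_cancel₀ _ hq]
  ring

lemma planeCross_reflectAcross (q w : Fin 2 → K) :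
    planeCross q (reflectAcross q w) = -planeCross q w := by
  simp only [reflectAcross, planeCross, Pi.sub_apply, Pi.smul_apply, smul_eq_mul]
  ring

open Classical in
/-- The framework obtained from `z` by reflecting its vertices in `S` across the line through
`z a` and `z b`. -/
noncomputable def foldAcross (a b : ι) (S : Set ι) (z : ι → Fin 2 → K) : ι → Fin 2 → K :=
  fun i => if i ∈ S then z a + reflectAcross (z b - z a) (z i - z a) else z i

lemma foldAcross_of_mem {a b i : ι} {S : Set ι} (hi : i ∈ S) (z : ι → Fin 2 → K) :
    foldAcross a b S z i = z a + reflectAcross (z b - z a) (z i - z a) :=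
  if_pos hi

lemma foldAcross_of_notMem {a b i : ι} {S : Set ι} (hi : i ∉ S) (z : ι → Fin 2 → K) :
    foldAcross a b S z i = z i :=
  if_neg hi

variable [NeZero (2 : K)]

lemma dotProduct_sub_sub_eq_of_sqDist_eq {κ : Type*} [Fintype κ] {a v w a' v' w' : κ → K}
    (hv : sqDist v a = sqDist v' a') (hw : sqDist w a = sqDist w' a')
    (hwv : sqDist w v = sqDist w' v') : (v - a) ⬝ᵥ (w - a) = (v' - a') ⬝ᵥ (w' - a') := by
  apply mul_left_cancel₀ (two_ne_zero (α := K))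
  rw [two_mul_dotProduct_sub_sub, two_mul_dotProduct_sub_sub, hv, hw, hwv]

lemma planeCross_sub_sub_eq_or_eq_neg_of_sqDist_eq {a v w a' v' w' : Fin 2 → K}
    (hv : sqDist v a = sqDist v' a') (hw : sqDist w a = sqDist w' a')
    (hwv : sqDist w v = sqDist w' v') :
    planeCross (v - a) (w - a) = planeCross (v' - a') (w' - a') ∨
      planeCross (v - a) (w - a) = -planeCross (v' - a') (w' - a') := by
  rw [← sq_eq_sq_iff_eq_or_eq_neg, planeCross_sq, planeCross_sq,
    dotProduct_sub_sub_eq_of_sqDist_eq hv hw hwv]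
  simp only [sqDist] at hv hw
  rw [hv, hw]

theorem exists_directlyCongruent_foldAcross {x z : ι → Fin 2 → K} {a b : ι}
    (hab : sqDist (z b) (z a) ≠ 0) (ha : ∀ i, sqDist (x i) (x a) = sqDist (z i) (z a))
    (hb : ∀ i, sqDist (x i) (x b) = sqDist (z i) (z b)) :
    ∃ S : Set ι, S ⊆ {a, b}ᶜ ∧ DirectlyCongruent (foldAcross a b S z) x := by
  let S : Set ι :=
    {i | planeCross (x b - x a) (x i - x a) ≠ planeCross (z b - z a) (z i - z a)}
  have haS : a ∉ S := by simp [S, planeCross_zero]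
  have hbS : b ∉ S := by simp [S, planeCross_self]
  have hdot (i : ι) : (x b - x a) ⬝ᵥ (x i - x a) = (z b - z a) ⬝ᵥ (z i - z a) :=
    dotProduct_sub_sub_eq_of_sqDist_eq (ha b) (ha i) (hb i)
  have hcross (i : ι) := planeCross_sub_sub_eq_or_eq_neg_of_sqDist_eq (ha b) (ha i) (hb i)
  have hfa : foldAcross a b S z a = z a := foldAcross_of_notMem haS z
  have hfb : foldAcross a b S z b = z b := foldAcross_of_notMem hbS z
  refine ⟨S, ?_, directlyCongruent_of_dotProduct_eq_of_planeCross_eq (a := a) (b := b) ?_ ?_ ?_⟩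
  · rintro i hi (rfl | rfl)
    exacts [haS hi, hbS hi]
  · rwa [hfa, hfb]
  all_goals
    intro i
    rw [hfa, hfb]
    by_cases hi : i ∈ S
  · rw [foldAcross_of_mem hi, add_sub_cancel_left, dotProduct_reflectAcross hab, hdot]
  · rw [foldAcross_of_notMem hi, hdot]
  · rw [foldAcross_of_mem hi, add_sub_cancel_left, planeCross_reflectAcross]
    exact (hcross i).resolve_left hi
  · rw [foldAcross_of_notMem hi]
    exact not_not.mp hi

theorem design_equilibria_finite_up_to_rigid_motions_general (d : Fin 5 → K) (hd : d 2 ≠ 0) :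
    ∃ y : Fin 4 → Fin 4 → Fin 2 → K, ∀ x : Fin 4 → Fin 2 → K,
      IsDesignEquilibrium d x → ∃ j : Fin 4, DirectlyCongruent (y j) x := by
  by_cases hex : ∃ z, IsDesignEquilibrium d z
  swap
  · exact ⟨0, fun x hx => (hex ⟨x, hx⟩).elim⟩
  obtain ⟨z, hz⟩ := hex
  have hbase : sqDist (z 2) (z 0) ≠ 0 := by
    rwa [sqDist_comm, hz.2.2.1]
  let flips : Fin 4 → Set (Fin 4) := ![∅, {1}, {3}, {1, 3}]
  refine ⟨fun j => foldAcross 0 2 (flips j) z, fun x hx => ?_⟩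
  obtain ⟨S, hS, hcongr⟩ := exists_directlyCongruent_foldAcross hbase
    (hx.sqDist_zero_eq hz) (hx.sqDist_two_eq hz)
  have hfree : ({0, 2}ᶜ : Set (Fin 4)) = {1, 3} := by
    ext i
    fin_cases i <;> simp
  obtain ⟨j, rfl⟩ : ∃ j, flips j = S := by
    rw [hfree, Set.subset_pair_iff_eq] at hS
    rcases hS with rfl | rfl | rfl | rfl
    exacts [⟨0, rfl⟩, ⟨1, rfl⟩, ⟨2, rfl⟩, ⟨3, rfl⟩]
  exact ⟨j, hcongr⟩

end Field

/-- The set of frameworks of the 2-cycles realizing prescribed positive squared edge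
lengths `d₁,…,d₅` is covered by at most 4 orbits of the group of orientation-preserving
rigid motions of the plane: there exist four frameworks `y¹,…,y⁴` such that any
framework satisfying the five edge-length constraints is the image of some `yʲ` under
a rotation (an orthogonal matrix of determinant one) followed by a translation. -/
theorem design_equilibria_finite_up_to_rigid_motions (d : Fin 5 → ℝ)
    (hd : ∀ i, 0 < d i) :
    ∃ y : Fin 4 → Fin 4 → Fin 2 → ℝ,
      ∀ x : Fin 4 → Fin 2 → ℝ,
        ((x 1 - x 0) ⬝ᵥ (x 1 - x 0) = d 0 ∧
         (x 2 - x 1) ⬝ᵥ (x 2 - x 1) = d 1 ∧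
         (x 0 - x 2) ⬝ᵥ (x 0 - x 2) = d 2 ∧
         (x 2 - x 3) ⬝ᵥ (x 2 - x 3) = d 3 ∧
         (x 3 - x 0) ⬝ᵥ (x 3 - x 0) = d 4) →
        ∃ j : Fin 4, ∃ R : Matrix (Fin 2) (Fin 2) ℝ, ∃ t : Fin 2 → ℝ,
          Rᵀ * R = 1 ∧ R.det = 1 ∧ ∀ i : Fin 4, x i = R.mulVec (y j i) + t :=
  design_equilibria_finite_up_to_rigid_motions_general d (hd 2).ne'
end
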